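/- Lemma 5.2 (derivative bounds for the self-similar electric potential). Suppose R_e(·,s) and R₊(·,s) are bounded functions supported in X₊={|y₁|≤e^{3s/2}, |y̌|≤e^{s/2}}, and let Φ(y,s)=∫(R₊−R_e)(y−z)·e^{−5s/2}(e^{−3s}|z₁|²+e^{−s}|ž|²)^{−1/2}dz. Then for every y∈X(s)⊂X₊ and every multi-index γ with |γ|≤4: |∂^γ∂₁Φ(y)| ≲ e^{−3s/2}(‖∂^γR_e‖_{L∞}+‖∂^γR₊‖_{L∞}) and |∂^γ∂_νΦ(y)| ≲ e^{−s/2}(‖∂^γR_e‖_{L∞}+‖∂^γR₊‖_{L∞}) for ν=2,3, with implicit constants independent of s, ε, M. -/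

import Mathlib

/-!
With the scales `c = (e^{-3s/2}, e^{-s/2}, e^{-s/2})` the potential is the convolution of the
density `f = R₊ - R_e` with `e^{-5s/2} Q^{-1/2}`, where `Q(z) = ∑ (c_j z_j)²`.

The kernel is locally integrable and `f` is `C⁵` with compact support, so all derivatives fall on
the density (`pdm_pot`), and since partial derivatives commute, `∂^γ ∂_i Φ` is the potential of
`∂_i h` with `h = ∂^γ f`. One derivative is then moved back to the kernel (`pot_pd_regular`). As
`Q^{-1/2}` is singular at the origin, the integration by parts is done for `(Q + δ)^{-1/2}`, whose
`i`-th derivative is at most `c_i / Q` uniformly in `δ > 0`; then `δ → 0` by dominated convergence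
(`abs_pot_pd_le`).

For `y ∈ X(s)` the integrand is supported in the box `|c_j z_j| ≤ 2` (`scl_mul_le`). There
`1/Q ≤ ∏ |c_j z_j|^{-2/3}` by the arithmetic-geometric mean inequality (`inv_quad_le_maj`), and this
product is integrable because each factor is integrable in one variable. Its integral over the box
is `A³ e^{5s/2}` with `A = ∫_{-2}^{2} |u|^{-2/3} du`, so the prefactor `e^{-5s/2}` cancels and
`c_i A³ ‖h‖_∞` remains. The same majorant gives the local integrability of the kernel.
-/


/-!
Lemma 5.2 (derivative bounds for the self-similar electric potential).
If `R_e(·,s)` and `R₊(·,s)` are bounded functions supported in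
`X₊ = {|y₁| ≤ e^{3s/2}, |y̌| ≤ e^{s/2}}` and
`Φ(y,s) = ∫ (R₊ - R_e)(y-z) e^{-5s/2}(e^{-3s}z₁² + e^{-s}|ž|²)^{-1/2} dz`,
then for every `y ∈ X(s) ⊂ X₊` and every multi-index `γ` with `|γ| ≤ 4`:
`|∂^γ∂₁Φ(y)| ≲ e^{-3s/2}(‖∂^γR_e‖_∞ + ‖∂^γR₊‖_∞)` and
`|∂^γ∂_νΦ(y)| ≲ e^{-s/2}(‖∂^γR_e‖_∞ + ‖∂^γR₊‖_∞)` (ν = 2,3),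
with constants independent of `s`, `ε`, `M`.
-/

open MeasureTheory

/-- Partial derivative in the coordinate direction `i`. -/
noncomputable def pd (i : Fin 3) (f : (Fin 3 → ℝ) → ℝ) : (Fin 3 → ℝ) → ℝ :=
  fun y => fderiv ℝ f y (Pi.single i 1)

/-- Iterated partial derivative `∂₁^a ∂₂^b ∂₃^c f`. -/
noncomputable def pdm (a b c : ℕ) (f : (Fin 3 → ℝ) → ℝ) : (Fin 3 → ℝ) → ℝ :=
  (pd 0)^[a] ((pd 1)^[b] ((pd 2)^[c] f))

/-- The large support set `X₊(s) = {|y₁| ≤ e^{3s/2}, |y̌| ≤ e^{s/2}}`. -/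
noncomputable def Xplus (s : ℝ) : Set (Fin 3 → ℝ) :=
  {y | |y 0| ≤ Real.exp (3*s/2) ∧
       Real.sqrt ((y 1)^2 + (y 2)^2) ≤ Real.exp (s/2)}

/-- The support set `X(s)`. -/
noncomputable def Xs (ε s : ℝ) : Set (Fin 3 → ℝ) :=
  {y | |y 0| ≤ 2 * ε ^ (1/2 : ℝ) * Real.exp (3*s/2) ∧
       Real.sqrt ((y 1)^2 + (y 2)^2) ≤ 2 * ε ^ (1/6 : ℝ) * Real.exp (s/2)}

/-! ### The majorant of the kernel -/

/-- The function `|u|^{-2/3}` truncated to `[-R, R]`. -/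
noncomputable def psi (R : ℝ) (u : ℝ) : ℝ :=
  (Set.Icc (-R) R).indicator (fun u => |u| ^ (-(2/3) : ℝ)) u

lemma psi_nonneg (R u : ℝ) : 0 ≤ psi R u := by
  unfold psi
  exact Set.indicator_nonneg (fun _ _ => Real.rpow_nonneg (abs_nonneg _) _) _

lemma psi_integrable {R : ℝ} (hR : 0 ≤ R) : Integrable (psi R) := by
  have h1 : IntervalIntegrable (fun u : ℝ => |u| ^ (-(2/3) : ℝ)) volume 0 R := by
    refine (intervalIntegral.intervalIntegrable_rpow' (r := -(2/3)) (by norm_num)).congr ?_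
    intro u hu
    rw [Set.uIoc_of_le hR] at hu
    simp [abs_of_pos hu.1]
  have h2 : IntervalIntegrable (fun u : ℝ => |u| ^ (-(2/3) : ℝ)) volume (-R) 0 := by
    have := (IntervalIntegrable.iff_comp_neg (f := fun u : ℝ => |u| ^ (-(2/3) : ℝ))).1 h1
    simpa using this.symm
  have h3 := h2.trans h1
  rw [intervalIntegrable_iff_integrableOn_Icc_of_le (by linarith)] at h3
  exact (integrable_indicator_iff measurableSet_Icc).2 h3

/-- The quadratic form `∑ (c_j z_j)²`. -/
noncomputable def quad (c z : Fin 3 → ℝ) : ℝ := ∑ j, (c j * z j) ^ 2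

lemma quad_nonneg (c z : Fin 3 → ℝ) : 0 ≤ quad c z :=
  Finset.sum_nonneg fun _ _ => sq_nonneg _

/-- The majorant `∏ |c_j z_j|^{-2/3}`, truncated to the box `|c_j z_j| ≤ R`. -/
noncomputable def maj (R : ℝ) (c z : Fin 3 → ℝ) : ℝ := ∏ j, psi R (c j * z j)

lemma maj_nonneg (R : ℝ) (c z : Fin 3 → ℝ) : 0 ≤ maj R c z :=
  Finset.prod_nonneg fun _ _ => psi_nonneg _ _

lemma maj_integrable {R : ℝ} (hR : 0 ≤ R) {c : Fin 3 → ℝ} (hc : ∀ j, 0 < c j) :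
    Integrable (maj R c) := by
  unfold maj
  exact Integrable.fintype_prod (f := fun j t => psi R (c j * t))
    (fun j => (psi_integrable hR).comp_mul_left' (hc j).ne')

lemma maj_integral (R : ℝ) {c : Fin 3 → ℝ} (hc : ∀ j, 0 < c j) :
    ∫ z, maj R c z = ∏ j, ((c j)⁻¹ * ∫ u, psi R u) := by
  unfold maj
  rw [volume_pi, integral_fintype_prod_eq_prod (fun j t => psi R (c j * t))]
  refine Finset.prod_congr rfl fun j _ => ?_
  rw [Measure.integral_comp_mul_left, abs_of_pos (inv_pos.2 (hc j)), smul_eq_mul]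

/-- Off the coordinate planes the real power `|u|^{-2/3}` does not take its junk value `0` at
`u = 0`, and the quadratic form is positive. -/
lemma ae_ne_zero : ∀ᵐ z : Fin 3 → ℝ, ∀ j, z j ≠ 0 := by
  rw [ae_all_iff]
  intro j
  exact Measure.ae_eval_ne (fun _ : Fin 3 => (volume : Measure ℝ)) j 0

lemma quad_pos {c z : Fin 3 → ℝ} (hc : ∀ j, 0 < c j) (hz : ∀ j, z j ≠ 0) : 0 < quad c z :=
  Finset.sum_pos (fun j _ => sq_pos_of_ne_zero (mul_ne_zero (hc j).ne' (hz j)))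
    Finset.univ_nonempty

/-- The arithmetic-geometric mean inequality bounds the inverse of the quadratic form by a product
of functions of one variable. -/
lemma inv_quad_le_maj {R : ℝ} {c z : Fin 3 → ℝ} (hc : ∀ j, 0 < c j) (hz : ∀ j, z j ≠ 0)
    (hR : ∀ j, |c j * z j| ≤ R) : (quad c z)⁻¹ ≤ maj R c z := by
  have hu : ∀ j, 0 < |c j * z j| := fun j => abs_pos.2 (mul_ne_zero (hc j).ne' (hz j))
  have hpow : ∀ j, ((c j * z j) ^ 2) ^ (1/3 : ℝ) = |c j * z j| ^ (2/3 : ℝ) := by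
    intro j
    rw [← sq_abs, ← Real.rpow_natCast, ← Real.rpow_mul (abs_nonneg _)]
    norm_num
  have hm : maj R c z = (∏ j, |c j * z j| ^ (2/3 : ℝ))⁻¹ := by
    unfold maj
    rw [← Finset.prod_inv_distrib]
    refine Finset.prod_congr rfl fun j _ => ?_
    rw [psi, Set.indicator_of_mem (show c j * z j ∈ Set.Icc (-R) R from abs_le.1 (hR j)),
      Real.rpow_neg (abs_nonneg _)]
  rw [hm]
  refine inv_anti₀ (Finset.prod_pos fun j _ => Real.rpow_pos_of_pos (hu j) _) ?_
  have h := Real.geom_mean_le_arith_mean3_weighted (w₁ := 1/3) (w₂ := 1/3) (w₃ := 1/3)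
    (by norm_num) (by norm_num) (by norm_num) (sq_nonneg (c 0 * z 0)) (sq_nonneg (c 1 * z 1))
    (sq_nonneg (c 2 * z 2)) (by norm_num)
  rw [hpow, hpow, hpow] at h
  rw [Fin.prod_univ_three, quad, Fin.sum_univ_three]
  nlinarith [sq_nonneg (c 0 * z 0), sq_nonneg (c 1 * z 1), sq_nonneg (c 2 * z 2)]

/-! ### The kernel and its regularization -/

/-- The kernel `(∑ (c_j z_j)² + δ)^{-1/2}`: Coulomb for `δ = 0`, smooth for `δ > 0`. -/
noncomputable def ker (δ : ℝ) (c z : Fin 3 → ℝ) : ℝ := (Real.sqrt (quad c z + δ))⁻¹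

lemma ker_nonneg (δ : ℝ) (c z : Fin 3 → ℝ) : 0 ≤ ker δ c z := by unfold ker; positivity

lemma contDiff_quad (c : Fin 3 → ℝ) : ContDiff ℝ 1 (quad c) := by
  unfold quad; fun_prop

lemma measurable_ker (δ : ℝ) (c : Fin 3 → ℝ) : Measurable (ker δ c) := by
  unfold ker
  exact (((contDiff_quad c).continuous.measurable.add_const δ).sqrt).inv

lemma contDiff_ker {δ : ℝ} (hδ : 0 < δ) (c : Fin 3 → ℝ) : ContDiff ℝ 1 (ker δ c) := by
  have hp : ∀ z, quad c z + δ ≠ 0 := fun z => (by linarith [quad_nonneg c z] : 0 < quad c z + δ).ne'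
  unfold ker
  exact (((contDiff_quad c).add contDiff_const).sqrt hp).inv
    fun z => (Real.sqrt_pos.2 (by linarith [quad_nonneg c z])).ne'

lemma fderiv_ker {δ : ℝ} (hδ : 0 < δ) (c z : Fin 3 → ℝ) (i : Fin 3) :
    fderiv ℝ (ker δ c) z (Pi.single i 1)
      = -(c i * (c i * z i)) / (Real.sqrt (quad c z + δ) * (quad c z + δ)) := by
  have hp : 0 < quad c z + δ := by linarith [quad_nonneg c z]
  have hq : fderiv ℝ (quad c) z (Pi.single i 1) = 2 * (c i * (c i * z i)) := by
    have h : HasFDerivAt (quad c)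
        (∑ j, (2 * (c j * z j)) • (c j • ContinuousLinearMap.proj (R := ℝ)
          (φ := fun _ : Fin 3 => ℝ) j)) z := by
      unfold quad
      refine HasFDerivAt.fun_sum fun j _ => ?_
      have h1 : HasFDerivAt (fun z : Fin 3 → ℝ => c j * z j)
          (c j • ContinuousLinearMap.proj (R := ℝ) (φ := fun _ : Fin 3 => ℝ) j) z :=
        (hasFDerivAt_apply j z).const_mul (c j)
      simpa using h1.pow 2
    rw [h.fderiv]
    simp [Pi.single_apply]
    ring
  have h0 : HasFDerivAt (quad c) (fderiv ℝ (quad c) z) z :=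
    ((contDiff_quad c).differentiable one_ne_zero z).hasFDerivAt
  have h1 : HasDerivAt (fun t : ℝ => (Real.sqrt (t + δ))⁻¹)
      (-(1 / (2 * Real.sqrt (quad c z + δ))) / Real.sqrt (quad c z + δ) ^ 2) (quad c z) :=
    (((hasDerivAt_id _).add_const δ).sqrt hp.ne').inv (Real.sqrt_pos.2 hp).ne'
  have h2 := h1.comp_hasFDerivAt z h0
  have h3 : fderiv ℝ (ker δ c) z = _ := h2.fderiv
  rw [h3]
  simp only [smul_apply, hq, smul_eq_mul, Real.sq_sqrt hp.le]
  have := (Real.sqrt_pos.2 hp).ne'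
  field_simp

lemma abs_fderiv_ker_le {δ : ℝ} (hδ : 0 < δ) {c z : Fin 3 → ℝ} (hc : ∀ j, 0 < c j)
    (hz : ∀ j, z j ≠ 0) (i : Fin 3) :
    |fderiv ℝ (ker δ c) z (Pi.single i 1)| ≤ c i * (quad c z)⁻¹ := by
  have hq := quad_pos hc hz
  have hp : 0 < quad c z + δ := by linarith
  have hs := Real.sqrt_pos.2 hp
  have hle : |c i * z i| ≤ Real.sqrt (quad c z + δ) := by
    refine Real.abs_le_sqrt ?_
    have : (c i * z i) ^ 2 ≤ quad c z :=
      Finset.single_le_sum (f := fun j => (c j * z j) ^ 2) (fun _ _ => sq_nonneg _)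
        (Finset.mem_univ i)
    linarith
  rw [fderiv_ker hδ, abs_div, abs_neg, abs_mul (c i), abs_of_pos (hc i),
    abs_of_pos (mul_pos hs hp), div_le_iff₀ (mul_pos hs hp)]
  calc c i * |c i * z i| ≤ c i * Real.sqrt (quad c z + δ) := by gcongr; exact (hc i).le
    _ = c i * (quad c z)⁻¹ * (Real.sqrt (quad c z + δ) * quad c z) := by field_simp
    _ ≤ _ := by have := (hc i).le; gcongr; linarith

lemma ker_le {δ : ℝ} (hδ : 0 ≤ δ) {c z : Fin 3 → ℝ} (hc : ∀ j, 0 < c j) (hz : ∀ j, z j ≠ 0) :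
    ker δ c z ≤ ker 0 c z := by
  have hq := quad_pos hc hz
  unfold ker
  exact inv_anti₀ (Real.sqrt_pos.2 (by linarith)) (Real.sqrt_le_sqrt (by linarith))

lemma locallyIntegrable_ker {c : Fin 3 → ℝ} (hc : ∀ j, 0 < c j) :
    LocallyIntegrable (ker 0 c) := by
  rw [locallyIntegrable_iff]
  intro k hk
  obtain ⟨B, hB⟩ := hk.isBounded.exists_norm_le
  set R : ℝ := ∑ j, c j * |B| with hR
  have hR0 : 0 ≤ R := Finset.sum_nonneg fun j _ => mul_nonneg (hc j).le (abs_nonneg _)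
  have h1 : IntegrableOn (fun z => 1 + maj R c z) k :=
    (integrableOn_const hk.measure_lt_top.ne).add (maj_integrable hR0 hc).integrableOn
  refine Integrable.mono' h1 (measurable_ker 0 c).aestronglyMeasurable ?_
  filter_upwards [ae_restrict_mem hk.measurableSet, ae_restrict_of_ae ae_ne_zero] with z hzk hz
  have hzR : ∀ j, |c j * z j| ≤ R := by
    intro j
    rw [abs_mul, abs_of_pos (hc j)]
    have h2 : |z j| ≤ |B| := ((norm_le_pi_norm z j).trans (hB z hzk)).trans (le_abs_self B)
    calc c j * |z j| ≤ c j * |B| := mul_le_mul_of_nonneg_left h2 (hc j).le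
      _ ≤ R := Finset.single_le_sum (f := fun j => c j * |B|)
        (fun j _ => mul_nonneg (hc j).le (abs_nonneg _)) (Finset.mem_univ j)
  have h3 := inv_quad_le_maj hc hz hzR
  have h4 : ker 0 c z ^ 2 = (quad c z)⁻¹ := by
    unfold ker; rw [inv_pow, add_zero, Real.sq_sqrt (quad_nonneg _ _)]
  rw [Real.norm_of_nonneg (ker_nonneg _ _ _)]
  -- `x ≤ 1 + x²` reduces the kernel `Q^{-1/2}` to the majorant of `Q^{-1}`.
  nlinarith [sq_nonneg (ker 0 c z - 1), ker_nonneg 0 c z]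

/-! ### The potential operator -/

/-- The potential `y ↦ ∫ k(z) g(y - z) dz` of the density `g`. -/
noncomputable def pot (k g : (Fin 3 → ℝ) → ℝ) (y : Fin 3 → ℝ) : ℝ := ∫ z, k z * g (y - z)

lemma pot_eq_convolution (k g : (Fin 3 → ℝ) → ℝ) :
    pot k g = convolution k g (ContinuousLinearMap.mul ℝ ℝ) volume := by
  ext y; simp [pot, convolution]

lemma continuous_pd {g : (Fin 3 → ℝ) → ℝ} (hg : ContDiff ℝ 1 g) (i : Fin 3) :
    Continuous (pd i g) := by
  unfold pd
  exact (hg.continuous_fderiv one_ne_zero).clm_apply continuous_const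

lemma tsupport_pd (g : (Fin 3 → ℝ) → ℝ) (i : Fin 3) : tsupport (pd i g) ⊆ tsupport g := by
  refine (closure_mono ?_).trans (tsupport_fderiv_subset ℝ (f := g))
  intro z hz h0
  exact hz (by simp [pd, h0])

lemma pd_pot {k g : (Fin 3 → ℝ) → ℝ} (hk : LocallyIntegrable k) (hg : ContDiff ℝ 1 g)
    (hs : HasCompactSupport g) (i : Fin 3) : pd i (pot k g) = pot k (pd i g) := by
  ext y
  rw [pd, pot_eq_convolution, pot_eq_convolution,
    (hs.hasFDerivAt_convolution_right (ContinuousLinearMap.mul ℝ ℝ) hk hg y).fderiv,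
    convolution_precompR_apply _ hk (hs.fderiv ℝ) (hg.continuous_fderiv one_ne_zero)]
  rfl

lemma contDiff_pd {n : ℕ} {g : (Fin 3 → ℝ) → ℝ} (hg : ContDiff ℝ (n + 1 : ℕ) g) (i : Fin 3) :
    ContDiff ℝ n (pd i g) := by
  unfold pd
  exact (hg.fderiv_right (m := n) (by norm_cast)).clm_apply contDiff_const

lemma pd_comm {g : (Fin 3 → ℝ) → ℝ} (hg : ContDiff ℝ 2 g) (i j : Fin 3) :
    pd i (pd j g) = pd j (pd i g) := by
  have hd : Differentiable ℝ (fderiv ℝ g) :=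
    (hg.fderiv_right (m := 1) (by norm_num)).differentiable one_ne_zero
  have key : ∀ (a b : Fin 3) y,
      pd a (pd b g) y = fderiv ℝ (fderiv ℝ g) y (Pi.single a 1) (Pi.single b 1) := by
    intro a b y
    have := ((hd y).hasFDerivAt.clm_apply (hasFDerivAt_const (Pi.single b (1 : ℝ)) y)).fderiv
    change fderiv ℝ (fun y => fderiv ℝ g y (Pi.single b 1)) y (Pi.single a 1) = _
    rw [this]
    simp
  ext y
  rw [key, key]
  exact (hg.contDiffAt.isSymmSndFDerivAt (by simp)).eq _ _

/-- A `C^n` density whose topological support lies in `X`. -/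
structure Adm (X : Set (Fin 3 → ℝ)) (n : ℕ) (g : (Fin 3 → ℝ) → ℝ) : Prop where
  smooth : ContDiff ℝ n g
  supp : tsupport g ⊆ X

lemma Adm.pd_iter {X : Set (Fin 3 → ℝ)} (i : Fin 3) (k : ℕ) {n : ℕ} {g : (Fin 3 → ℝ) → ℝ}
    (hg : Adm X (n + k) g) : Adm X n ((pd i)^[k] g) := by
  induction k generalizing g with
  | zero => exact hg
  | succ k ih =>
    exact ih ⟨contDiff_pd hg.smooth i, (tsupport_pd g i).trans hg.supp⟩

lemma Adm.hasCompactSupport {X : Set (Fin 3 → ℝ)} (hX : IsCompact X) {n : ℕ}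
    {g : (Fin 3 → ℝ) → ℝ} (hg : Adm X n g) : HasCompactSupport g :=
  hX.of_isClosed_subset (isClosed_tsupport g) hg.supp

lemma Adm.of_le {X : Set (Fin 3 → ℝ)} {m n : ℕ} {g : (Fin 3 → ℝ) → ℝ} (hg : Adm X n g)
    (h : m ≤ n) : Adm X m g := ⟨hg.smooth.of_le (by exact_mod_cast h), hg.supp⟩

lemma pd_iter_pot {X : Set (Fin 3 → ℝ)} (hX : IsCompact X) {k : (Fin 3 → ℝ) → ℝ}
    (hk : LocallyIntegrable k) (i : Fin 3) (m : ℕ) {g : (Fin 3 → ℝ) → ℝ} (hg : Adm X m g) :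
    (pd i)^[m] (pot k g) = pot k ((pd i)^[m] g) := by
  induction m generalizing g with
  | zero => rfl
  | succ m ih =>
    rw [Function.iterate_succ_apply, Function.iterate_succ_apply,
      pd_pot hk (hg.smooth.of_le (by norm_cast; omega)) (hg.hasCompactSupport hX)]
    exact ih (Adm.pd_iter i 1 (n := m) hg)

lemma pd_iter_comm (i j : Fin 3) (m : ℕ) {g : (Fin 3 → ℝ) → ℝ}
    (hg : ContDiff ℝ (m + 1 : ℕ) g) : pd i ((pd j)^[m] g) = (pd j)^[m] (pd i g) := by
  induction m generalizing g with
  | zero => rfl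
  | succ m ih =>
    rw [Function.iterate_succ_apply, Function.iterate_succ_apply, ih (contDiff_pd hg j),
      pd_comm (hg.of_le (by norm_cast; omega))]

lemma pd_iter_sub (i : Fin 3) (m : ℕ) {f g : (Fin 3 → ℝ) → ℝ}
    (hf : ContDiff ℝ m f) (hg : ContDiff ℝ m g) :
    (pd i)^[m] (f - g) = (pd i)^[m] f - (pd i)^[m] g := by
  induction m generalizing f g with
  | zero => rfl
  | succ m ih =>
    have : pd i (f - g) = pd i f - pd i g := by
      ext y
      have h1 : (1 : WithTop ℕ∞) ≤ (m + 1 : ℕ) := by norm_cast; omega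
      simp only [pd, Pi.sub_apply]
      rw [fderiv_sub (hf.differentiable (by simp) y) (hg.differentiable (by simp) y)]
      rfl
    rw [Function.iterate_succ_apply, this, ih (contDiff_pd hf i) (contDiff_pd hg i)]
    rfl

lemma Adm.pdm {X : Set (Fin 3 → ℝ)} {a b c n : ℕ} {g : (Fin 3 → ℝ) → ℝ}
    (hg : Adm X (n + a + b + c) g) : Adm X n (pdm a b c g) :=
  Adm.pd_iter 0 a (Adm.pd_iter 1 b (Adm.pd_iter 2 c hg))

lemma pdm_pot {X : Set (Fin 3 → ℝ)} (hX : IsCompact X) {k : (Fin 3 → ℝ) → ℝ}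
    (hk : LocallyIntegrable k) {a b c : ℕ} {g : (Fin 3 → ℝ) → ℝ} (hg : Adm X (a + b + c) g) :
    pdm a b c (pot k g) = pot k (pdm a b c g) := by
  unfold pdm
  rw [pd_iter_pot hX hk 2 c (hg.of_le (by omega)),
    pd_iter_pot hX hk 1 b ((Adm.pd_iter 2 c (n := a + b) hg).of_le (by omega)),
    pd_iter_pot hX hk 0 a (Adm.pd_iter 1 b (Adm.pd_iter 2 c hg))]

lemma pdm_sub {X : Set (Fin 3 → ℝ)} {a b c : ℕ} {f g : (Fin 3 → ℝ) → ℝ}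
    (hf : Adm X (a + b + c) f) (hg : Adm X (a + b + c) g) :
    pdm a b c (f - g) = pdm a b c f - pdm a b c g := by
  unfold pdm
  rw [pd_iter_sub 2 c (hf.of_le (by omega)).smooth (hg.of_le (by omega)).smooth,
    pd_iter_sub 1 b ((Adm.pd_iter 2 c (n := a + b) hf).of_le (by omega)).smooth
      ((Adm.pd_iter 2 c (n := a + b) hg).of_le (by omega)).smooth,
    pd_iter_sub 0 a (Adm.pd_iter 1 b (Adm.pd_iter 2 c hf)).smooth
      (Adm.pd_iter 1 b (Adm.pd_iter 2 c hg)).smooth]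

lemma pdm_succ_zero {a b c : ℕ} (g : (Fin 3 → ℝ) → ℝ) :
    pdm (a + 1) b c g = pd 0 (pdm a b c g) := by
  unfold pdm; rw [Function.iterate_succ_apply']

lemma pdm_succ_one {X : Set (Fin 3 → ℝ)} {a b c : ℕ} {g : (Fin 3 → ℝ) → ℝ}
    (hg : Adm X (a + b + c + 1) g) :
    pdm a (b + 1) c g = pd 1 (pdm a b c g) := by
  unfold pdm
  rw [Function.iterate_succ_apply', pd_iter_comm 1 0 a]
  exact (Adm.pd_iter 1 b (n := a + 1) (Adm.pd_iter 2 c (hg.of_le (by omega)))).smooth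

lemma pdm_succ_two {X : Set (Fin 3 → ℝ)} {a b c : ℕ} {g : (Fin 3 → ℝ) → ℝ}
    (hg : Adm X (a + b + c + 1) g) :
    pdm a b (c + 1) g = pd 2 (pdm a b c g) := by
  unfold pdm
  rw [Function.iterate_succ_apply', pd_iter_comm 2 0 a, pd_iter_comm 2 1 b]
  · exact (Adm.pd_iter 2 c (n := b + 1) (hg.of_le (by omega))).smooth
  · exact (Adm.pd_iter 1 b (n := a + 1) (Adm.pd_iter 2 c (hg.of_le (by omega)))).smooth

/-! ### Integration by parts -/

lemma hasCompactSupport_reflect {g : (Fin 3 → ℝ) → ℝ} (hg : HasCompactSupport g)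
    (y : Fin 3 → ℝ) : HasCompactSupport fun z => g (y - z) :=
  hg.comp_homeomorph (Homeomorph.subLeft y)

/-- The sign from integrating by parts cancels the one from differentiating `z ↦ g(y - z)`. -/
lemma pot_pd_regular {δ : ℝ} (hδ : 0 < δ) (c : Fin 3 → ℝ) {g : (Fin 3 → ℝ) → ℝ}
    (hg : ContDiff ℝ 1 g) (hs : HasCompactSupport g) (i : Fin 3) (y : Fin 3 → ℝ) :
    pot (ker δ c) (pd i g) y = ∫ z, pd i (ker δ c) z * g (y - z) := by
  have hK := contDiff_ker hδ c
  have hr : ContDiff ℝ 1 (fun z => g (y - z)) := hg.comp (contDiff_const.sub contDiff_id)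
  have hrs := hasCompactSupport_reflect hs y
  have hfd : ∀ z, fderiv ℝ (fun z => g (y - z)) z (Pi.single i 1) = -pd i g (y - z) := by
    intro z
    have h1 : HasFDerivAt (fun z : Fin 3 → ℝ => y - z)
        (-(ContinuousLinearMap.id ℝ (Fin 3 → ℝ))) z := (hasFDerivAt_id z).const_sub y
    have h2 := ((hg.differentiable one_ne_zero (y - z)).hasFDerivAt).comp z h1
    have h3 : fderiv ℝ (fun z => g (y - z)) z = _ := h2.fderiv
    rw [h3]
    simp [pd]
  have hcr : Continuous fun z => pd i g (y - z) :=
    (continuous_pd hg i).comp (continuous_const.sub continuous_id)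
  have hcs : HasCompactSupport fun z => pd i g (y - z) :=
    hasCompactSupport_reflect (hs.mono' ((subset_tsupport _).trans (tsupport_pd g i))) y
  have h := integral_mul_fderiv_eq_neg_fderiv_mul_of_integrable (μ := volume)
    (f := ker δ c) (g := fun z => g (y - z)) (v := Pi.single i (1 : ℝ))
    (((continuous_pd hK i).mul hr.continuous).integrable_of_hasCompactSupport hrs.mul_left)
    (by
      simp only [hfd]
      exact (hK.continuous.mul hcr.neg).integrable_of_hasCompactSupport hcs.neg.mul_left)
    ((hK.continuous.mul hr.continuous).integrable_of_hasCompactSupport hrs.mul_left)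
    (fun z _ => hK.differentiable one_ne_zero z) (fun z _ => hr.differentiable one_ne_zero z)
  simp only [hfd, mul_neg, integral_neg, neg_inj] at h
  exact h

/-- The kernel bound uniform in the regularization, with the support of `z ↦ g(y - z)` placed in
the box `|c_j z_j| ≤ 2` by hypothesis. -/
lemma abs_pot_pd_regular_le {δ : ℝ} (hδ : 0 < δ) {c : Fin 3 → ℝ} (hc : ∀ j, 0 < c j)
    {g : (Fin 3 → ℝ) → ℝ} (hg : ContDiff ℝ 1 g) (hs : HasCompactSupport g) {M : ℝ}
    (hM : ∀ z, |g z| ≤ M) (i : Fin 3) {y : Fin 3 → ℝ}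
    (hy : ∀ z, g (y - z) ≠ 0 → ∀ j, |c j * z j| ≤ 2) :
    |pot (ker δ c) (pd i g) y| ≤ c i * M * ∏ j, ((c j)⁻¹ * ∫ u, psi 2 u) := by
  rw [pot_pd_regular hδ c hg hs, ← maj_integral 2 hc, ← integral_const_mul, ← Real.norm_eq_abs]
  refine norm_integral_le_of_norm_le ((maj_integrable (by norm_num) hc).const_mul _) ?_
  filter_upwards [ae_ne_zero] with z hz
  have hM0 : 0 ≤ M := (abs_nonneg _).trans (hM 0)
  by_cases h0 : g (y - z) = 0
  · rw [h0, mul_zero, norm_zero]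
    exact mul_nonneg (mul_nonneg (hc i).le hM0) (maj_nonneg _ _ _)
  · rw [norm_mul, Real.norm_eq_abs, Real.norm_eq_abs]
    calc |pd i (ker δ c) z| * |g (y - z)| ≤ (c i * maj 2 c z) * M :=
          mul_le_mul ((abs_fderiv_ker_le hδ hc hz i).trans
            (mul_le_mul_of_nonneg_left (inv_quad_le_maj hc hz (hy z h0)) (hc i).le))
            (hM _) (abs_nonneg _) (mul_nonneg (hc i).le (maj_nonneg _ _ _))
      _ = _ := by ring

/-- The bound for the Coulomb kernel, by letting the regularization tend to zero. -/
lemma abs_pot_pd_le {c : Fin 3 → ℝ} (hc : ∀ j, 0 < c j)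
    {g : (Fin 3 → ℝ) → ℝ} (hg : ContDiff ℝ 1 g) (hs : HasCompactSupport g) {M : ℝ}
    (hM : ∀ z, |g z| ≤ M) (i : Fin 3) {y : Fin 3 → ℝ}
    (hy : ∀ z, g (y - z) ≠ 0 → ∀ j, |c j * z j| ≤ 2) :
    |pot (ker 0 c) (pd i g) y| ≤ c i * M * ∏ j, ((c j)⁻¹ * ∫ u, psi 2 u) := by
  have hcr : Continuous fun z => pd i g (y - z) :=
    (continuous_pd hg i).comp (continuous_const.sub continuous_id)
  have hcs : HasCompactSupport fun z => pd i g (y - z) :=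
    hasCompactSupport_reflect (hs.mono' ((subset_tsupport _).trans (tsupport_pd g i))) y
  have hint := (locallyIntegrable_ker hc).integrable_smul_left_of_hasCompactSupport hcr hcs
  have hlim : Filter.Tendsto (fun n : ℕ => pot (ker (1 / ((n : ℝ) + 1)) c) (pd i g) y)
      Filter.atTop (nhds (pot (ker 0 c) (pd i g) y)) := by
    refine tendsto_integral_of_dominated_convergence _ (fun n => ?_) hint.norm (fun n => ?_) ?_
    · exact (measurable_ker _ c).aestronglyMeasurable.mul hcr.aestronglyMeasurable
    · filter_upwards [ae_ne_zero] with z hz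
      rw [norm_mul, norm_smul, mul_comm, Real.norm_of_nonneg (ker_nonneg _ _ _),
        Real.norm_of_nonneg (ker_nonneg _ _ _)]
      exact mul_le_mul_of_nonneg_left (ker_le (by positivity) hc hz) (norm_nonneg _)
    · filter_upwards [ae_ne_zero] with z hz
      have hq := quad_pos hc hz
      refine Filter.Tendsto.mul_const _ ?_
      unfold ker
      refine Filter.Tendsto.inv₀ ?_ (Real.sqrt_pos.2 (by linarith)).ne'
      exact (Real.continuous_sqrt.tendsto _).comp
        (tendsto_const_nhds.add tendsto_one_div_add_atTop_nhds_zero_nat)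
  exact le_of_tendsto hlim.abs (Filter.Eventually.of_forall fun n =>
    abs_pot_pd_regular_le (by positivity) hc hg hs hM i hy)

/-! ### The self-similar scales -/

/-- The self-similar scales `(e^{-3s/2}, e^{-s/2}, e^{-s/2})`. -/
noncomputable def scl (s : ℝ) : Fin 3 → ℝ :=
  ![Real.exp (-(3*s/2)), Real.exp (-(s/2)), Real.exp (-(s/2))]

lemma scl_pos (s : ℝ) (j : Fin 3) : 0 < scl s j := by
  fin_cases j <;> simp [scl, Real.exp_pos]

lemma isCompact_Xplus (s : ℝ) : IsCompact (Xplus s) := by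
  refine Metric.isCompact_of_isClosed_isBounded ?_ ?_
  · unfold Xplus
    refine IsClosed.inter (s₁ := {y : Fin 3 → ℝ | |y 0| ≤ Real.exp (3*s/2)})
      (s₂ := {y : Fin 3 → ℝ | Real.sqrt ((y 1)^2 + (y 2)^2) ≤ Real.exp (s/2)})
      (isClosed_le ?_ continuous_const) (isClosed_le ?_ continuous_const)
    · fun_prop
    · fun_prop
  · refine (Metric.isBounded_closedBall (x := (0 : Fin 3 → ℝ))
      (r := Real.exp (3*s/2) + Real.exp (s/2))).subset ?_
    rintro y ⟨h0, h1⟩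
    have e0 := Real.exp_pos (3*s/2)
    have e1 := Real.exp_pos (s/2)
    rw [mem_closedBall_zero_iff, pi_norm_le_iff_of_nonneg (by positivity)]
    intro j
    rw [Real.norm_eq_abs]
    fin_cases j
    · exact h0.trans (by linarith)
    · exact ((Real.abs_le_sqrt (show y 1 ^ 2 ≤ _ by nlinarith)).trans h1).trans (by linarith)
    · exact ((Real.abs_le_sqrt (show y 2 ^ 2 ≤ _ by nlinarith)).trans h1).trans (by linarith)

/-- For `ε ≤ 1/64` a point `y ∈ X(s)` lies in `X₊(s)`, so `y - z ∈ X₊(s)` confines `z` to the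
doubled box. -/
lemma scl_mul_le {s ε : ℝ} (hε : 0 < ε) (hε' : ε ≤ 1/64) {y z : Fin 3 → ℝ} (hy : y ∈ Xs ε s)
    (hz : y - z ∈ Xplus s) (j : Fin 3) : |scl s j * z j| ≤ 2 := by
  have p1 : ε ^ (1/2 : ℝ) ≤ 1/2 := by
    calc ε ^ (1/2 : ℝ) ≤ (1/4 : ℝ) ^ (1/2 : ℝ) :=
          Real.rpow_le_rpow hε.le (by linarith) (by norm_num)
      _ = 1/2 := by
        rw [show (1/4 : ℝ) = (1/2) ^ (2 : ℝ) by norm_num, ← Real.rpow_mul (by norm_num)]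
        norm_num
  have p2 : ε ^ (1/6 : ℝ) ≤ 1/2 := by
    calc ε ^ (1/6 : ℝ) ≤ (1/64 : ℝ) ^ (1/6 : ℝ) :=
          Real.rpow_le_rpow hε.le hε' (by norm_num)
      _ = 1/2 := by
        rw [show (1/64 : ℝ) = (1/2) ^ (6 : ℝ) by norm_num, ← Real.rpow_mul (by norm_num)]
        norm_num
  obtain ⟨hy0, hy1⟩ := hy
  obtain ⟨hz0, hz1⟩ := hz
  have e0 := Real.exp_pos (3*s/2)
  have e1 := Real.exp_pos (s/2)
  have q0 : 2 * ε ^ (1/2 : ℝ) * Real.exp (3*s/2) ≤ Real.exp (3*s/2) := by nlinarith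
  have q1 : 2 * ε ^ (1/6 : ℝ) * Real.exp (s/2) ≤ Real.exp (s/2) := by nlinarith
  have tri : ∀ (j : Fin 3) (E : ℝ), |y j| ≤ E → |(y - z) j| ≤ E → |z j| ≤ 2 * E := by
    intro j E h1 h2
    rw [Pi.sub_apply, abs_le] at h2
    rw [abs_le] at h1 ⊢
    constructor <;> linarith [h1.1, h1.2, h2.1, h2.2]
  have fin : ∀ (t : ℝ) (x : ℝ), |x| ≤ 2 * Real.exp t → |Real.exp (-t) * x| ≤ 2 := by
    intro t x hx
    rw [abs_mul, abs_of_pos (Real.exp_pos _), Real.exp_neg]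
    have := Real.exp_pos t
    rw [inv_mul_le_iff₀ this]
    linarith
  fin_cases j
  · exact fin _ _ (tri 0 _ (hy0.trans q0) hz0)
  · exact fin _ _ (tri 1 _ (((Real.abs_le_sqrt (by nlinarith)).trans hy1).trans q1)
      ((Real.abs_le_sqrt (by nlinarith)).trans hz1))
  · exact fin _ _ (tri 2 _ (((Real.abs_le_sqrt (by nlinarith)).trans hy1).trans q1)
      ((Real.abs_le_sqrt (by nlinarith)).trans hz1))

lemma quad_scl (s : ℝ) (z : Fin 3 → ℝ) :
    quad (scl s) z = Real.exp (-3*s) * (z 0)^2 + Real.exp (-s) * ((z 1)^2 + (z 2)^2) := by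
  have h0 : Real.exp (-3*s) = Real.exp (-(3*s/2)) ^ 2 := by
    rw [← Real.exp_nat_mul]; congr 1; push_cast; ring
  have h1 : Real.exp (-s) = Real.exp (-(s/2)) ^ 2 := by
    rw [← Real.exp_nat_mul]; congr 1; push_cast; ring
  rw [quad, Fin.sum_univ_three, h0, h1]
  simp [scl]
  ring

/-- The Jacobian `e^{5s/2}` of the scaling cancels the prefactor of the potential. -/
lemma prod_scl (s A : ℝ) :
    Real.exp (-(5/2)*s) * ∏ j, ((scl s j)⁻¹ * A) = A ^ 3 := by
  have : Real.exp (-(5/2)*s) = Real.exp (-(3*s/2)) * Real.exp (-(s/2)) * Real.exp (-(s/2)) := by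
    rw [← Real.exp_add, ← Real.exp_add]; congr 1; ring
  rw [this, Fin.prod_univ_three]
  simp only [scl, Matrix.cons_val_zero, Matrix.cons_val_one, Matrix.cons_val]
  field_simp

lemma adm_of_support {s : ℝ} {n : ℕ} {g : (Fin 3 → ℝ) → ℝ} (hg : ContDiff ℝ n g)
    (h : ∀ z, g z ≠ 0 → z ∈ Xplus s) : Adm (Xplus s) n g :=
  ⟨hg, closure_minimal h (isCompact_Xplus s).isClosed⟩

theorem potential_derivative_bounds :
    ∃ C : ℝ, 0 < C ∧
    ∀ (s ε : ℝ), 0 < ε → ε ≤ 1/64 →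
    ∀ (Re Rp Φ : (Fin 3 → ℝ) → ℝ),
      -- regularity and boundedness
      ContDiff ℝ 5 Re → ContDiff ℝ 5 Rp →
      (∃ B : ℝ, ∀ z, |Re z| ≤ B ∧ |Rp z| ≤ B) →
      -- support conditions
      (∀ z : Fin 3 → ℝ, Re z ≠ 0 → z ∈ Xplus s) →
      (∀ z : Fin 3 → ℝ, Rp z ≠ 0 → z ∈ Xplus s) →
      -- the self-similar electric potential
      (∀ y : Fin 3 → ℝ,
        Φ y = ∫ z : Fin 3 → ℝ,
          (Rp (y - z) - Re (y - z)) * Real.exp (-(5/2)*s) /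
            Real.sqrt (Real.exp (-3*s) * (z 0)^2
              + Real.exp (-s) * ((z 1)^2 + (z 2)^2))) →
      -- conclusion
      ∀ a b c : ℕ, a + b + c ≤ 4 →
      ∀ Ce Cp : ℝ,
        (∀ z : Fin 3 → ℝ, |pdm a b c Re z| ≤ Ce) →
        (∀ z : Fin 3 → ℝ, |pdm a b c Rp z| ≤ Cp) →
        ∀ y ∈ Xs ε s,
          |pdm (a+1) b c Φ y| ≤ C * Real.exp (-(3/2)*s) * (Ce + Cp) ∧
          |pdm a (b+1) c Φ y| ≤ C * Real.exp (-s/2) * (Ce + Cp) ∧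
          |pdm a b (c+1) Φ y| ≤ C * Real.exp (-s/2) * (Ce + Cp) := by
  -- Adding `1` makes the positivity of the constant immediate.
  refine ⟨(∫ u, psi 2 u) ^ 3 + 1, ?_, ?_⟩
  · have : 0 ≤ ∫ u, psi 2 u := integral_nonneg (psi_nonneg 2)
    positivity
  intro s ε hε hε' Re Rp Φ hRe hRp _ hse hsp hΦ a b c habc Ce Cp hCe hCp y hy
  have hX := isCompact_Xplus s
  have hk := locallyIntegrable_ker (scl_pos s)
  have aRe : Adm (Xplus s) 5 Re := adm_of_support (by exact_mod_cast hRe) hse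
  have aRp : Adm (Xplus s) 5 Rp := adm_of_support (by exact_mod_cast hRp) hsp
  have af : Adm (Xplus s) 5 (Rp - Re) := by
    refine adm_of_support (aRp.smooth.sub aRe.smooth) fun z hz => ?_
    by_cases h : Rp z = 0
    · refine hse z fun h' => hz ?_
      simp [h, h']
    · exact hsp z h
  set E := Real.exp (-(5/2)*s) with hE
  have hE0 : 0 < E := Real.exp_pos _
  have hk' : LocallyIntegrable fun z => E * ker 0 (scl s) z := hk.smul E
  have hΦ' : Φ = pot (fun z => E * ker 0 (scl s) z) (Rp - Re) := by
    ext y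
    rw [hΦ y, pot]
    refine integral_congr_ae (Filter.Eventually.of_forall fun z => ?_)
    simp only [ker, add_zero, quad_scl, Pi.sub_apply]
    ring
  have ah : Adm (Xplus s) 1 (pdm a b c (Rp - Re)) := Adm.pdm (af.of_le (by omega))
  have hM : ∀ z, |pdm a b c (Rp - Re) z| ≤ Ce + Cp := by
    intro z
    rw [pdm_sub (aRp.of_le (by omega)) (aRe.of_le (by omega)), Pi.sub_apply]
    exact (abs_sub _ _).trans (by linarith [hCe z, hCp z])
  have hsupp : ∀ z, pdm a b c (Rp - Re) (y - z) ≠ 0 → ∀ j, |scl s j * z j| ≤ 2 :=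
    fun z hz => scl_mul_le hε hε' hy (ah.supp (subset_tsupport _ hz))
  have hM0 : 0 ≤ Ce + Cp := (abs_nonneg _).trans (hM 0)
  have key : ∀ i, |pot (fun z => E * ker 0 (scl s) z) (pd i (pdm a b c (Rp - Re))) y|
      ≤ ((∫ u, psi 2 u) ^ 3 + 1) * scl s i * (Ce + Cp) := by
    intro i
    have h1 := abs_pot_pd_le (scl_pos s) ah.smooth (ah.hasCompactSupport hX) hM i hsupp
    have h2 : pot (fun z => E * ker 0 (scl s) z) (pd i (pdm a b c (Rp - Re))) y
        = E * pot (ker 0 (scl s)) (pd i (pdm a b c (Rp - Re))) y := by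
      simp only [pot, mul_assoc, integral_const_mul]
    rw [h2, abs_mul, abs_of_pos hE0]
    calc _ ≤ E * (scl s i * (Ce + Cp) * ∏ j, ((scl s j)⁻¹ * ∫ u, psi 2 u)) := by gcongr
      _ = scl s i * (Ce + Cp) * (E * ∏ j, ((scl s j)⁻¹ * ∫ u, psi 2 u)) := by ring
      _ = scl s i * (Ce + Cp) * (∫ u, psi 2 u) ^ 3 := by rw [hE, prod_scl]
      _ ≤ _ := by nlinarith [mul_nonneg (scl_pos s i).le hM0]
  have e0 : Real.exp (-(3/2)*s) = scl s 0 := by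
    simp only [scl, Matrix.cons_val_zero]; congr 1; ring
  have e1 : Real.exp (-s/2) = scl s 1 := by
    simp only [scl, Matrix.cons_val_one, Matrix.cons_val_zero]; congr 1; ring
  have e2 : Real.exp (-s/2) = scl s 2 := e1
  refine ⟨?_, ?_, ?_⟩
  · rw [hΦ', pdm_pot hX hk' (af.of_le (by omega)), pdm_succ_zero, e0]
    exact key 0
  · rw [hΦ', pdm_pot hX hk' (af.of_le (by omega)), pdm_succ_one (af.of_le (by omega)), e1]
    exact key 1
  · rw [hΦ', pdm_pot hX hk' (af.of_le (by omega)), pdm_succ_two (af.of_le (by omega)), e2]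
    exact key 2
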